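/- The set { T ∈ (0,1) : lim_{n→∞} H(T_n)/n = T } is dense in the interval [0,1]. -/

import Mathlib

open Filter

/-- A set of finite binary strings is prefix-free if no element of it is a
prefix of another (distinct) element of it. -/
def PrefixFree (S : Set (List Bool)) : Prop :=
  ∀ p ∈ S, ∀ q ∈ S, p <+: q → p = q

/-- A computer: a partial recursive function from finite binary strings to
finite binary strings whose domain is a prefix-free set. -/
structure Computer where
  f : List Bool →. List Bool
  partrec : Partrec f
  prefixFree : PrefixFree {p | (f p).Dom}

/-- The domain of a computer. -/
def Computer.domain (C : Computer) : Set (List Bool) := {p | (C.f p).Dom}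

/-- A computer `U` is optimal if every computer can be simulated on `U` with
only a constant increase in program length. -/
def IsOptimal (U : Computer) : Prop :=
  ∀ C : Computer, ∃ d : ℕ, ∀ p : List Bool, (C.f p).Dom →
    ∃ p' : List Bool, p'.length ≤ p.length + d ∧ ∀ s, s ∈ C.f p → s ∈ U.f p'

/-- Program-size complexity `H(s)`: the minimal length of a program `p`
with `U(p) = s`. -/
noncomputable def H (U : Computer) (s : List Bool) : ℕ :=
  sInf {n | ∃ p : List Bool, p.length = n ∧ s ∈ U.f p}

/-- The `n`-th bit (`n ≥ 1`) of the base-two expansion of `x mod 1`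
(the expansion chosen with infinitely many zeros). -/
noncomputable def binDigit (x : ℝ) (n : ℕ) : Bool :=
  decide (⌊Int.fract x * 2 ^ n⌋ % 2 = 1)

/-- The first `n` bits of the base-two expansion of `x mod 1` (with
infinitely many zeros). -/
noncomputable def bits (x : ℝ) (n : ℕ) : List Bool :=
  (List.range n).map fun i => binDigit x (i + 1)

/-- A real `x` is weakly Chaitin `D`-random (w.r.t. the computer `U`). -/
def WeaklyChaitinRandom (U : Computer) (D x : ℝ) : Prop :=
  ∃ c : ℝ, ∀ n : ℕ, 1 ≤ n → D * n - c ≤ (H U (bits x n) : ℝ)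

/-- A real `x` is Chaitin `D`-random (w.r.t. the computer `U`). -/
def ChaitinRandom (U : Computer) (D x : ℝ) : Prop :=
  Tendsto (fun n : ℕ => (H U (bits x n) : ℝ) - D * n) atTop atTop

/-- A real `x` is `D`-compressible (w.r.t. the computer `U`). -/
def DCompressible (U : Computer) (D x : ℝ) : Prop :=
  Filter.limsup (fun n : ℕ => (H U (bits x n) : ℝ) / n) atTop ≤ D

/-- A computable real number. -/
def ComputableReal (T : ℝ) : Prop :=
  ∃ f : ℕ → ℚ, Computable f ∧ ∀ n : ℕ, 1 ≤ n → |T - (f n : ℝ)| < 1 / n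

/-- A right-computable real number. -/
def RightComputable (T : ℝ) : Prop :=
  ∃ g : ℕ → ℚ, Computable g ∧ (∀ n, T ≤ (g n : ℝ)) ∧
    Tendsto (fun n => ((g n : ℚ) : ℝ)) atTop (nhds T)

/-- A left-computable real number. -/
def LeftComputable (T : ℝ) : Prop := RightComputable (-T)

/-- The term `2 ^ (-|p| / T)` of the partition function `Z(T)`. -/
noncomputable def zterm (U : Computer) (T : ℝ) (p : U.domain) : ℝ :=
  (2 : ℝ) ^ (-((p : List Bool).length : ℝ) / T)

/-- The term `|p| ^ Q * 2 ^ (-|p| / T)` of `W(Q,T)`. -/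
noncomputable def wterm (U : Computer) (Q T : ℝ) (p : U.domain) : ℝ :=
  ((p : List Bool).length : ℝ) ^ Q * (2 : ℝ) ^ (-((p : List Bool).length : ℝ) / T)

/-- The term `|p| * 2 ^ (-|p| / T)` of `W(1,T)`. -/
noncomputable def wlterm (U : Computer) (T : ℝ) (p : U.domain) : ℝ :=
  ((p : List Bool).length : ℝ) * (2 : ℝ) ^ (-((p : List Bool).length : ℝ) / T)

/-- The term `|p| ^ 2 * 2 ^ (-|p| / T)` of `W(2,T)`. -/
noncomputable def wsqterm (U : Computer) (T : ℝ) (p : U.domain) : ℝ :=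
  ((p : List Bool).length : ℝ) ^ 2 * (2 : ℝ) ^ (-((p : List Bool).length : ℝ) / T)

/-- A lower-computable function `f : ℕ⁺ → [0,∞)` (represented on `ℕ`,
with all conditions imposed on positive arguments). -/
def LowerComputableFun (f : ℕ → ℝ) : Prop :=
  ∃ a : ℕ → ℕ → ℚ, Computable₂ a ∧
    (∀ k n : ℕ, 1 ≤ k → 1 ≤ n → (a k n : ℝ) ≤ f n) ∧
    (∀ n : ℕ, 1 ≤ n → Tendsto (fun k => ((a k n : ℚ) : ℝ)) atTop (nhds (f n)))

/-- A lower-computable semi-measure on finite binary strings. -/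
def LowerComputableSemiMeasure (r : List Bool → ℝ) : Prop :=
  (∀ s, 0 ≤ r s) ∧ (∀ s, r s ≤ 1) ∧ Summable r ∧ (∑' s, r s) ≤ 1 ∧
    ∃ f : ℕ → List Bool → ℚ, Computable₂ f ∧
      (∀ n s, ((f n s : ℚ) : ℝ) ≤ r s) ∧
      (∀ s, Tendsto (fun n => ((f n s : ℚ) : ℝ)) atTop (nhds (r s)))

/-- A universal probability. -/
def UniversalProbability (m : List Bool → ℝ) : Prop :=
  LowerComputableSemiMeasure m ∧
    ∀ r : List Bool → ℝ, LowerComputableSemiMeasure r →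
      ∃ c : ℝ, 0 < c ∧ ∀ s, c * r s ≤ m s

/-!
For a continuous target `θ` (the identity, in the fixed-point case), a real `T` with
`H(Tₙ) / n → θ T` is built greedily, block by block, from an arbitrary initial word. Any word can be
extended by `k ^ 2` bits so that the total weight `∑ 2 ^ (-|p|)` of the programs whose output
extends it drops by the factor `2 ^ (-k ^ 2)`; this raises the lower bound on the complexity of
every later prefix by `k ^ 2`, and `k ^ 2 + O(k)` bits suffice to describe the block. Appending
`k ^ 2` zeros instead costs only `O(k)` bits. Choosing at step `k` the first option exactly when the
randomness `r` injected so far is below `|s| * θ (0.s)`, with `s` the current word, keeps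
`r - |s| * θ T = o(|s|)`. After `k` steps `|s|` is of order `k ^ 3`, so neither the accumulated
`O(k)` terms nor the prefixes inside a block affect the limit.
-/

open Asymptotics
open scoped ENNReal Topology

theorem exists_stages_of_partrec {α σ : Type*} [Primcodable α] [Primcodable σ] {f : α →. σ}
    (hf : Partrec f) :
    ∃ F : ℕ → α → Option σ, Computable₂ F ∧ ∀ a b, b ∈ f a ↔ ∃ k, b ∈ F k a := by
  obtain ⟨c, hc⟩ := Nat.Partrec.Code.exists_code.1 hf
  refine ⟨fun k a => (Nat.Partrec.Code.evaln k c (Encodable.encode a)).bind Encodable.decode,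
    ?_, fun a b => ?_⟩
  · have heval : Computable₂ fun (k : ℕ) (a : α) =>
        Nat.Partrec.Code.evaln k c (Encodable.encode a) :=
      Nat.Partrec.Code.primrec_evaln.to_comp.comp
        ((Computable.fst.pair (Computable.const c)).pair (Computable.encode.comp Computable.snd))
    exact Computable.option_bind heval (Computable.decode.comp Computable.snd)
  · have heval : ∀ m, (∃ k, m ∈ Nat.Partrec.Code.evaln k c (Encodable.encode a)) ↔
        ∃ b ∈ f a, Encodable.encode b = m := fun m => by
      rw [← Nat.Partrec.Code.evaln_complete, hc]
      simp
    simp only [Option.mem_def, Option.bind_eq_some_iff] at heval ⊢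
    constructor
    · intro hb
      obtain ⟨k, hk⟩ := (heval _).2 ⟨b, hb, rfl⟩
      exact ⟨k, _, hk, Encodable.encodek b⟩
    · rintro ⟨k, m, hk, hm⟩
      obtain ⟨b', hb', rfl⟩ := (heval m).1 ⟨k, hk⟩
      rw [Encodable.encodek, Option.some_inj] at hm
      exact hm ▸ hb'

theorem exists_partrec_mem_iff_exists {α σ : Type*} [Primcodable α] [Primcodable σ]
    {R : α → ℕ →. σ} (hR : Partrec₂ R)
    (huniq : ∀ a i j, ∀ b ∈ R a i, ∀ c ∈ R a j, b = c) :
    ∃ f : α →. σ, Partrec f ∧ ∀ a b, b ∈ f a ↔ ∃ i, b ∈ R a i := by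
  obtain ⟨F, hF, hFR⟩ := exists_stages_of_partrec hR
  have hFR' : ∀ (a : α) (n : ℕ) (b : σ), b ∈ F n.unpair.1 (a, n.unpair.2) → b ∈ R a n.unpair.2 :=
    fun a n b hb => (hFR _ _).2 ⟨_, hb⟩
  refine ⟨fun a => Nat.rfindOpt fun n => F n.unpair.1 (a, n.unpair.2), ?_, fun a b => ⟨?_, ?_⟩⟩
  · have hunpair := Computable.unpair.comp (Computable.snd (α := α) (β := ℕ))
    exact Partrec.rfindOpt <| hF.comp (Computable.fst.comp hunpair)
      (Computable.fst.pair (Computable.snd.comp hunpair))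
  · intro hb
    obtain ⟨n, hn⟩ := Nat.rfindOpt_spec hb
    exact ⟨_, hFR' a n b hn⟩
  · rintro ⟨i, hi⟩
    obtain ⟨k, hk⟩ := (hFR (a, i) b).1 hi
    have hdom : (Nat.rfindOpt fun n => F n.unpair.1 (a, n.unpair.2)).Dom :=
      Nat.rfindOpt_dom.2 ⟨Nat.pair k i, b, by simpa using hk⟩
    obtain ⟨c, hc⟩ := Part.dom_iff_mem.1 hdom
    obtain ⟨n, hn⟩ := Nat.rfindOpt_spec hc
    rwa [huniq a i _ b hi c (hFR' a n c hn)]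

theorem PrefixFree.append_inj {S : Set (List Bool)} (hS : PrefixFree S) {p p' q q' : List Bool}
    (hp : p ∈ S) (hp' : p' ∈ S) (h : p ++ q <+: p' ++ q') : p = p' ∧ q <+: q' := by
  have hpp' : p = p' := by
    rcases List.prefix_or_prefix_of_prefix ((List.prefix_append p q).trans h)
      (List.prefix_append p' q') with hpre | hpre
    exacts [hS p hp p' hp' hpre, (hS p' hp' p hp hpre).symm]
  subst hpp'
  exact ⟨rfl, (List.prefix_append_right_inj p).1 h⟩

theorem Computer.exists_append (C D : Computer) :
    ∃ E : Computer, ∀ p q s t, s ∈ C.f p → t ∈ D.f q → s ++ t ∈ E.f (p ++ q) := by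
  let R : List Bool → ℕ →. List Bool := fun x i =>
    (C.f (x.take i)).bind fun s => (D.f (x.drop i)).map fun t => s ++ t
  have hR : ∀ {x i u}, u ∈ R x i ↔
      ∃ s ∈ C.f (x.take i), ∃ t ∈ D.f (x.drop i), s ++ t = u := by simp [R]
  have hpartrec : Partrec₂ R := by
    have htake : Computable fun a : List Bool × ℕ => a.1.take a.2 :=
      Primrec.list_take.to_comp.comp Computable.snd Computable.fst
    have hdrop : Computable fun a : List Bool × ℕ => a.1.drop a.2 :=
      Primrec.list_drop.to_comp.comp Computable.snd Computable.fst
    exact (C.partrec.comp htake).bind <| (D.partrec.comp (hdrop.comp Computable.fst)).map <|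
      Computable.list_append.comp (Computable.snd.comp Computable.fst) Computable.snd
  have hparse : ∀ {x y i j u v}, x <+: y → u ∈ R x i → v ∈ R y j → u = v ∧ x = y := by
    intro x y i j u v hxy hu hv
    obtain ⟨s, hs, t, ht, rfl⟩ := hR.1 hu
    obtain ⟨s', hs', t', ht', rfl⟩ := hR.1 hv
    rw [← x.take_append_drop i, ← y.take_append_drop j] at hxy ⊢
    obtain ⟨htake, hdrop⟩ := C.prefixFree.append_inj (Part.dom_iff_mem.2 ⟨s, hs⟩)
      (Part.dom_iff_mem.2 ⟨s', hs'⟩) hxy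
    replace hdrop := D.prefixFree _ (Part.dom_iff_mem.2 ⟨t, ht⟩) _ (Part.dom_iff_mem.2 ⟨t', ht'⟩)
      hdrop
    rw [← htake] at hs' ⊢
    rw [← hdrop] at ht' ⊢
    exact ⟨by rw [Part.mem_unique hs hs', Part.mem_unique ht ht'], rfl⟩
  obtain ⟨f, hf, hfR⟩ := exists_partrec_mem_iff_exists hpartrec fun x i j u hu v hv =>
    (hparse List.prefix_rfl hu hv).1
  refine ⟨⟨f, hf, fun x hx y hy hxy => ?_⟩, fun p q s t hs ht => ?_⟩
  · obtain ⟨u, hu⟩ := Part.dom_iff_mem.1 hx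
    obtain ⟨v, hv⟩ := Part.dom_iff_mem.1 hy
    obtain ⟨i, hi⟩ := (hfR x u).1 hu
    obtain ⟨j, hj⟩ := (hfR y v).1 hv
    exact (hparse hxy hi hj).2
  · refine (hfR _ _).2 ⟨p.length, hR.2 ⟨s, ?_, t, ?_, rfl⟩⟩
    · rwa [List.take_left]
    · rwa [List.drop_left]

/-- Decodes `1ᵏ0u` with `|u| = m k` to `g k u`, and rejects every other string. The leading block of
ones makes these codes self-delimiting. -/
def decodeUnaryHeader (m : ℕ → ℕ) (g : ℕ → List Bool → List Bool) (x : List Bool) :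
    Option (List Bool) :=
  if x.length = x.idxOf false + 1 + m (x.idxOf false) then
    some (g (x.idxOf false) (x.drop (x.idxOf false + 1)))
  else none

section UnaryHeader

variable {m : ℕ → ℕ} {g : ℕ → List Bool → List Bool}

theorem computable_decodeUnaryHeader (hm : Computable m) (hg : Computable₂ g) :
    Computable (decodeUnaryHeader m g) := by
  have hidx : Computable fun x : List Bool => x.idxOf false :=
    (Primrec.list_idxOf.comp (Primrec.const false) Primrec.id).to_comp
  have hidx_succ := Computable.succ.comp hidx
  have hlength : Computable fun x : List Bool =>
      x.length == x.idxOf false + 1 + m (x.idxOf false) :=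
    Primrec.beq.to_comp.comp Computable.list_length
      (Primrec.nat_add.to_comp.comp hidx_succ (hm.comp hidx))
  have hout : Computable fun x : List Bool =>
      some (g (x.idxOf false) (x.drop (x.idxOf false + 1))) :=
    Computable.option_some.comp (hg.comp hidx
      (Primrec.list_drop.to_comp.comp hidx_succ Computable.id))
  exact (Computable.cond hlength hout (Computable.const none)).of_eq fun x => by
    simp [decodeUnaryHeader, Bool.cond_eq_ite]

theorem prefixFree_decodeUnaryHeader :
    PrefixFree {x | ((decodeUnaryHeader m g x : Option (List Bool)) : Part (List Bool)).Dom} := by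
  have hlength : ∀ x, ((decodeUnaryHeader m g x : Option (List Bool)) : Part (List Bool)).Dom →
      x.length = x.idxOf false + 1 + m (x.idxOf false) := by
    intro x hx
    by_contra hne
    simp [decodeUnaryHeader, hne] at hx
  intro x hx y hy hxy
  replace hx := hlength x hx
  replace hy := hlength y hy
  have hmem : false ∈ x := List.idxOf_lt_length_iff.1 (by omega)
  refine hxy.eq_of_length ?_
  obtain ⟨z, rfl⟩ := hxy
  rw [List.idxOf_append_of_mem hmem] at hy
  exact hx.trans hy.symm

theorem decodeUnaryHeader_apply {k : ℕ} {u : List Bool} (hu : u.length = m k) :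
    decodeUnaryHeader m g (List.replicate k true ++ false :: u) = some (g k u) := by
  have hidx : (List.replicate k true ++ false :: u).idxOf false = k := by
    rw [List.idxOf_append_of_notMem (by simp)]
    simp
  have hdrop : (List.replicate k true ++ false :: u).drop (k + 1) = u := by
    rw [List.drop_append]
    simp
  simp only [decodeUnaryHeader, hidx, hdrop, List.length_append, List.length_replicate,
    List.length_cons, hu]
  exact if_pos (by omega)

end UnaryHeader

theorem Computer.exists_unaryHeader {m : ℕ → ℕ} {g : ℕ → List Bool → List Bool}
    (hm : Computable m) (hg : Computable₂ g) :
    ∃ C : Computer, ∀ k u, u.length = m k → g k u ∈ C.f (List.replicate k true ++ false :: u) :=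
  ⟨⟨fun x => decodeUnaryHeader m g x, (computable_decodeUnaryHeader hm hg).ofOption,
    prefixFree_decodeUnaryHeader⟩, fun k u hu => by simp [decodeUnaryHeader_apply hu]⟩

theorem H_le_length {U : Computer} {s p : List Bool} (h : s ∈ U.f p) : H U s ≤ p.length :=
  Nat.sInf_le ⟨p, rfl, h⟩

namespace IsOptimal

variable {U : Computer}

theorem exists_program_le (hU : IsOptimal U) (C : Computer) :
    ∃ d, ∀ p s, s ∈ C.f p → ∃ p', p'.length ≤ p.length + d ∧ s ∈ U.f p' := by
  obtain ⟨d, hd⟩ := hU C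
  refine ⟨d, fun p s hs => ?_⟩
  obtain ⟨p', hle, hp'⟩ := hd p (Part.dom_iff_mem.2 ⟨s, hs⟩)
  exact ⟨p', hle, hp' s hs⟩

theorem exists_length_eq_H (hU : IsOptimal U) (s : List Bool) :
    ∃ p, p.length = H U s ∧ s ∈ U.f p := by
  obtain ⟨C, hC⟩ := Computer.exists_unaryHeader (m := fun _ => 0) (g := fun _ _ => s)
    (Computable.const 0) (Computable.const s)
  obtain ⟨d, hd⟩ := hU.exists_program_le C
  obtain ⟨p, -, hp⟩ := hd _ _ (hC 0 [] rfl)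
  have hne : {n | ∃ p : List Bool, p.length = n ∧ s ∈ U.f p}.Nonempty := ⟨p.length, p, rfl, hp⟩
  exact Nat.sInf_mem hne

theorem H_append_le (hU : IsOptimal U) : ∃ d, ∀ s t, H U (s ++ t) ≤ H U s + H U t + d := by
  obtain ⟨C, hC⟩ := U.exists_append U
  obtain ⟨d, hd⟩ := hU.exists_program_le C
  refine ⟨d, fun s t => ?_⟩
  obtain ⟨p, hp, hs⟩ := hU.exists_length_eq_H s
  obtain ⟨q, hq, ht⟩ := hU.exists_length_eq_H t
  obtain ⟨p', hle, hp'⟩ := hd _ _ (hC p q s t hs ht)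
  rw [List.length_append, hp, hq] at hle
  exact (H_le_length hp').trans hle

theorem H_le_of_unaryHeader (hU : IsOptimal U) {m : ℕ → ℕ}
    {g : ℕ → List Bool → List Bool} (hm : Computable m) (hg : Computable₂ g) :
    ∃ d, ∀ k u, u.length = m k → H U (g k u) ≤ k + m k + d := by
  obtain ⟨C, hC⟩ := Computer.exists_unaryHeader hm hg
  obtain ⟨d, hd⟩ := hU.exists_program_le C
  refine ⟨d + 1, fun k u hu => ?_⟩
  obtain ⟨p, hle, hp⟩ := hd _ _ (hC k u hu)
  simp only [List.length_append, List.length_replicate, List.length_cons, hu] at hle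
  exact (H_le_length hp).trans (by omega)

theorem H_le_of_length_eq_sq (hU : IsOptimal U) :
    ∃ d, ∀ k u, u.length = k ^ 2 → H U u ≤ k + k ^ 2 + d :=
  hU.H_le_of_unaryHeader (m := fun k => k ^ 2) (g := fun _ u => u)
    ((Primrec.nat_mul.comp Primrec.id Primrec.id).to_comp.of_eq fun k => (sq k).symm)
    Computable.snd

theorem H_replicate_sq_le (hU : IsOptimal U) (b : Bool) :
    ∃ d, ∀ k, H U (List.replicate (k ^ 2) b) ≤ k + d := by
  have hg : Primrec fun k : ℕ => List.replicate (k ^ 2) b :=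
    (Primrec.list_map (Primrec.list_range.comp (Primrec.nat_mul.comp Primrec.id Primrec.id))
      (Primrec.const b).to₂).of_eq fun k => by simp [sq]
  obtain ⟨d, hd⟩ := hU.H_le_of_unaryHeader (m := fun _ => 0)
    (g := fun k _ => List.replicate (k ^ 2) b) (Computable.const 0)
    (hg.to_comp.comp Computable.fst)
  exact ⟨d, fun k => hd k [] rfl⟩

theorem H_append_le_mul_length (hU : IsOptimal U) :
    ∃ c, ∀ s t, H U (s ++ t) ≤ H U s + c * t.length := by
  obtain ⟨d, hd⟩ := hU.H_append_le
  have hbit : ∀ s b, H U (s ++ [b]) ≤ H U s + (H U [true] + H U [false] + d) := by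
    intro s b
    have := hd s [b]
    cases b <;> omega
  refine ⟨H U [true] + H U [false] + d, fun s t => ?_⟩
  induction t using List.reverseRecOn with
  | nil => simp
  | append_singleton t b ih =>
    rw [← List.append_assoc, List.length_append, List.length_singleton, mul_add_one]
    exact (hbit _ b).trans (by omega)

end IsOptimal

theorem PrefixFree.mono {S T : Set (List Bool)} (hT : PrefixFree T) (h : S ⊆ T) : PrefixFree S :=
  fun p hp q hq => hT p (h hp) q (h hq)

theorem PrefixFree.uniquelyDecodable {S : Set (List Bool)} (hS : PrefixFree S) (hnil : [] ∉ S) :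
    InformationTheory.UniquelyDecodable S := by
  intro L
  induction L with
  | nil =>
    rintro (_ | ⟨q, L'⟩) - hL' h
    · rfl
    · have hq : q = [] := (List.append_eq_nil_iff.1 h.symm).1
      exact absurd (hq ▸ hL' q List.mem_cons_self) hnil
  | cons p L ih =>
    rintro (_ | ⟨q, L'⟩) hL hL' h
    · have hp : p = [] := (List.append_eq_nil_iff.1 h).1
      exact absurd (hp ▸ hL p List.mem_cons_self) hnil
    · rw [List.forall_mem_cons] at hL hL'
      rw [List.flatten_cons, List.flatten_cons] at h
      obtain ⟨rfl, -⟩ := hS.append_inj hL.1 hL'.1 ⟨[], by rw [List.append_nil, h]⟩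
      rw [ih L' hL.2 hL'.2 (List.append_cancel_left h)]

/-- The total weight `∑ 2^(-|p|)` of a set of programs, as in Kraft's inequality. -/
noncomputable def codeWeight (S : Set (List Bool)) : ℝ≥0∞ :=
  ∑' p : S, 2⁻¹ ^ (p : List Bool).length

theorem codeWeight_mono {S T : Set (List Bool)} (h : S ⊆ T) : codeWeight S ≤ codeWeight T :=
  ENNReal.tsum_mono_subtype (fun p : List Bool => 2⁻¹ ^ p.length) h

theorem codeWeight_union {S T : Set (List Bool)} (h : Disjoint S T) :
    codeWeight (S ∪ T) = codeWeight S + codeWeight T :=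
  ENNReal.summable.tsum_union_disjoint (f := fun p : List Bool => 2⁻¹ ^ p.length) h
    ENNReal.summable

theorem two_inv_pow_length_le_codeWeight {S : Set (List Bool)} {p : List Bool} (hp : p ∈ S) :
    2⁻¹ ^ p.length ≤ codeWeight S :=
  ENNReal.le_tsum (⟨p, hp⟩ : S)

theorem PrefixFree.codeWeight_le_one {S : Set (List Bool)} (hS : PrefixFree S) :
    codeWeight S ≤ 1 := by
  by_cases hnil : [] ∈ S
  · calc codeWeight S ≤ codeWeight {[]} :=
          codeWeight_mono fun p hp => (hS [] hnil p hp List.nil_prefix).symm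
      _ = 1 := by simp [codeWeight]
  rw [codeWeight, ENNReal.tsum_eq_iSup_sum]
  refine iSup_le fun F => ?_
  have hsub : (F.map (Function.Embedding.subtype _) : Set (List Bool)) ⊆ S := by simp
  have hkraft := InformationTheory.kraft_mcmillan_inequality
    ((hS.mono hsub).uniquelyDecodable fun h => hnil (hsub h))
  rw [Finset.sum_map, Fintype.card_bool] at hkraft
  calc ∑ p ∈ F, (2⁻¹ : ℝ≥0∞) ^ (p : List Bool).length
      = ENNReal.ofReal (∑ p ∈ F, (1 / (2 : ℕ) : ℝ) ^ (p : List Bool).length) := by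
        rw [ENNReal.ofReal_sum_of_nonneg fun _ _ => by positivity]
        refine Finset.sum_congr rfl fun p _ => ?_
        rw [ENNReal.ofReal_pow (by positivity), one_div, ENNReal.ofReal_inv_of_pos (by positivity)]
        simp
    _ ≤ 1 := ENNReal.ofReal_le_one.2 hkraft

namespace Computer

/-- The programs whose output extends `s`. Their total weight is a continuous a priori
semimeasure of the cylinder of `s`. -/
def programsExtending (U : Computer) (s : List Bool) : Set (List Bool) :=
  {p | ∃ o ∈ U.f p, s <+: o}

variable (U : Computer)

theorem programsExtending_subset_domain (s : List Bool) : U.programsExtending s ⊆ U.domain :=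
  fun _ ⟨o, ho, _⟩ => Part.dom_iff_mem.2 ⟨o, ho⟩

theorem programsExtending_anti {s t : List Bool} (h : s <+: t) :
    U.programsExtending t ⊆ U.programsExtending s :=
  fun _ ⟨o, ho, hto⟩ => ⟨o, ho, h.trans hto⟩

theorem disjoint_programsExtending_append_singleton (s : List Bool) :
    Disjoint (U.programsExtending (s ++ [true])) (U.programsExtending (s ++ [false])) := by
  refine Set.disjoint_left.2 ?_
  rintro p ⟨o, ho, htrue⟩ ⟨o', ho', hfalse⟩
  rw [Part.mem_unique ho' ho] at hfalse
  simpa using List.prefix_of_prefix_length_le htrue hfalse (by simp)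

theorem codeWeight_programsExtending_le_one (s : List Bool) :
    codeWeight (U.programsExtending s) ≤ 1 :=
  (U.prefixFree.mono (U.programsExtending_subset_domain s)).codeWeight_le_one

theorem exists_bit_codeWeight_le (s : List Bool) :
    ∃ b, codeWeight (U.programsExtending (s ++ [b])) ≤
      2⁻¹ * codeWeight (U.programsExtending s) := by
  by_contra! hlt
  have hadd := ENNReal.add_lt_add (hlt true) (hlt false)
  rw [← add_mul, ENNReal.inv_two_add_inv_two, one_mul, ← codeWeight_union
    (U.disjoint_programsExtending_append_singleton s)] at hadd
  exact hadd.not_ge <| codeWeight_mono <| Set.union_subset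
    (U.programsExtending_anti (List.prefix_append _ _))
    (U.programsExtending_anti (List.prefix_append _ _))

theorem exists_block_codeWeight_le (s : List Bool) (n : ℕ) :
    ∃ t : List Bool, t.length = n ∧
      codeWeight (U.programsExtending (s ++ t)) ≤ 2⁻¹ ^ n * codeWeight (U.programsExtending s) := by
  induction n with
  | zero => exact ⟨[], rfl, by simp⟩
  | succ n ih =>
    obtain ⟨t, ht, hweight⟩ := ih
    obtain ⟨b, hb⟩ := U.exists_bit_codeWeight_le (s ++ t)
    refine ⟨t ++ [b], by simp [ht], ?_⟩
    calc codeWeight (U.programsExtending (s ++ (t ++ [b])))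
        ≤ 2⁻¹ * codeWeight (U.programsExtending (s ++ t)) := by rwa [← List.append_assoc]
      _ ≤ 2⁻¹ * (2⁻¹ ^ n * codeWeight (U.programsExtending s)) := by gcongr
      _ = 2⁻¹ ^ (n + 1) * codeWeight (U.programsExtending s) := by rw [pow_succ', mul_assoc]

end Computer

theorem IsOptimal.le_H_of_codeWeight_le {U : Computer} (hU : IsOptimal U) {s t : List Bool} {r : ℕ}
    (hst : s <+: t) (h : codeWeight (U.programsExtending s) ≤ 2⁻¹ ^ r) : r ≤ H U t := by
  obtain ⟨p, hp, ht⟩ := hU.exists_length_eq_H t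
  have hpow : (2⁻¹ : ℝ≥0∞) ^ p.length ≤ 2⁻¹ ^ r :=
    (two_inv_pow_length_le_codeWeight (S := U.programsExtending s) ⟨t, ht, hst⟩).trans h
  rw [← ENNReal.inv_pow, ← ENNReal.inv_pow, ENNReal.inv_le_inv] at hpow
  have hpow : 2 ^ r ≤ 2 ^ p.length := by exact_mod_cast hpow
  rw [← hp]
  exact (Nat.pow_le_pow_iff_right one_lt_two).1 hpow

/-- The natural number with binary expansion `s`, most significant bit first. -/
def binaryValue (s : List Bool) : ℕ :=
  s.foldl (fun n b => 2 * n + b.toNat) 0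

theorem binaryValue_append_singleton (s : List Bool) (b : Bool) :
    binaryValue (s ++ [b]) = 2 * binaryValue s + b.toNat := by
  simp [binaryValue]

theorem binaryValue_append (s t : List Bool) :
    binaryValue (s ++ t) = 2 ^ t.length * binaryValue s + binaryValue t := by
  induction t using List.reverseRecOn with
  | nil => simp [binaryValue]
  | append_singleton t b ih =>
    rw [← List.append_assoc, binaryValue_append_singleton, binaryValue_append_singleton, ih,
      List.length_append, List.length_singleton, pow_succ]
    ring

theorem binaryValue_lt (s : List Bool) : binaryValue s < 2 ^ s.length := by
  induction s using List.reverseRecOn with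
  | nil => simp [binaryValue]
  | append_singleton s b ih =>
    rw [binaryValue_append_singleton, List.length_append, List.length_singleton, pow_succ]
    have := b.toNat_le
    omega

theorem length_bits (x : ℝ) (n : ℕ) : (bits x n).length = n := by simp [bits]

theorem bits_succ (x : ℝ) (n : ℕ) : bits x (n + 1) = bits x n ++ [binDigit x (n + 1)] := by
  simp [bits, List.range_succ]

theorem bits_prefix_bits (x : ℝ) {n m : ℕ} (h : n ≤ m) : bits x n <+: bits x m := by
  induction m, h using Nat.le_induction with
  | base => exact List.prefix_rfl
  | succ m _ ih => exact bits_succ x m ▸ ih.trans (List.prefix_append _ _)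

theorem bits_length_eq_iff {x : ℝ} {s : List Bool} :
    bits x s.length = s ↔ ⌊Int.fract x * 2 ^ s.length⌋ = binaryValue s := by
  induction s using List.reverseRecOn with
  | nil => simp [bits, binaryValue]
  | append_singleton s b ih =>
    have hfloor : ⌊Int.fract x * 2 ^ s.length⌋ = ⌊Int.fract x * 2 ^ (s.length + 1)⌋ / 2 := by
      rw [← Nat.cast_ofNat (R := ℤ), ← Int.floor_div_natCast, pow_succ, ← mul_assoc]
      simp
    rw [List.length_append, List.length_singleton, bits_succ, List.append_singleton_inj,
      ih, binaryValue_append_singleton, hfloor, binDigit]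
    cases b <;> simp <;> omega

theorem floor_fract_mul_two_pow (x : ℝ) (n : ℕ) :
    ⌊Int.fract x * 2 ^ n⌋ = binaryValue (bits x n) := by
  have h := bits_length_eq_iff (x := x) (s := bits x n)
  simp only [length_bits, true_iff] at h
  exact h

theorem abs_sub_lt_of_bits_eq {x y : ℝ} (hx : x ∈ Set.Ico 0 1) (hy : y ∈ Set.Ico 0 1) {n : ℕ}
    (h : bits x n = bits y n) : |x - y| < (1 / 2) ^ n := by
  have hfloor : ⌊x * 2 ^ n⌋ = ⌊y * 2 ^ n⌋ := by
    rw [← Int.fract_eq_self.2 hx, ← Int.fract_eq_self.2 hy, floor_fract_mul_two_pow, h,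
      ← floor_fract_mul_two_pow]
  have habs := Int.abs_sub_lt_one_of_floor_eq_floor hfloor
  rwa [← sub_mul, abs_mul, abs_of_pos (by positivity : (0 : ℝ) < 2 ^ n),
    ← lt_div_iff₀ (by positivity), ← one_div_pow] at habs

/-- The dyadic rational `0.s`, left endpoint of the interval of reals whose expansion begins
with `s`. -/
noncomputable def dyadic (s : List Bool) : ℝ :=
  binaryValue s / 2 ^ s.length

theorem dyadic_nonneg (s : List Bool) : 0 ≤ dyadic s := by
  unfold dyadic
  positivity

theorem dyadic_add_le_one (s : List Bool) : dyadic s + (1 / 2) ^ s.length ≤ 1 := by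
  rw [dyadic, one_div_pow, ← add_div, div_le_one (by positivity)]
  exact_mod_cast binaryValue_lt s

theorem dyadic_append (s t : List Bool) :
    dyadic (s ++ t) = dyadic s + (1 / 2) ^ s.length * dyadic t := by
  simp only [dyadic, binaryValue_append, List.length_append, one_div, inv_pow]
  push_cast
  field_simp
  ring

theorem dyadic_append_false_add_lt (s t : List Bool) :
    dyadic (s ++ (t ++ [false])) + (1 / 2) ^ (s ++ (t ++ [false])).length <
      dyadic s + (1 / 2) ^ s.length := by
  have hlt : dyadic (t ++ [false]) + (1 / 2) ^ (t ++ [false]).length < 1 := by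
    have hzero : dyadic [false] = 0 := by simp [dyadic, binaryValue]
    have hpos : (0 : ℝ) < (1 / 2) ^ t.length := by positivity
    rw [dyadic_append, hzero, List.length_append, List.length_singleton, pow_succ]
    linarith [dyadic_add_le_one t]
  calc dyadic (s ++ (t ++ [false])) + (1 / 2) ^ (s ++ (t ++ [false])).length
      = dyadic s + (1 / 2) ^ s.length *
          (dyadic (t ++ [false]) + (1 / 2) ^ (t ++ [false]).length) := by
        rw [dyadic_append, List.length_append, pow_add, mul_add, add_assoc]
    _ < dyadic s + (1 / 2) ^ s.length := by
        gcongr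
        exact mul_lt_of_lt_one_right (by positivity) hlt

theorem bits_length_eq_of_mem_Ico {x : ℝ} {s : List Bool}
    (hx : x ∈ Set.Ico (dyadic s) (dyadic s + (1 / 2) ^ s.length)) : bits x s.length = s := by
  have hfract : Int.fract x = x := Int.fract_eq_self.2
    ⟨(dyadic_nonneg s).trans hx.1, hx.2.trans_le (dyadic_add_le_one s)⟩
  rw [dyadic, one_div_pow, ← add_div, Set.mem_Ico, div_le_iff₀ (by positivity),
    lt_div_iff₀ (by positivity)] at hx
  rw [bits_length_eq_iff, hfract, Int.floor_eq_iff]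
  exact_mod_cast hx

theorem tendsto_dyadic_bits {x : ℝ} (hx : x ∈ Set.Ico 0 1) :
    Tendsto (fun n => dyadic (bits x n)) atTop (𝓝 x) := by
  have hfloor : ∀ n, dyadic (bits x n) = (⌊x * 2 ^ n⌋₊ : ℝ) / 2 ^ n := fun n => by
    rw [natCast_floor_eq_intCast_floor (mul_nonneg hx.1 (by positivity)), dyadic, length_bits]
    nth_rw 2 [← Int.fract_eq_self.2 hx]
    rw [floor_fract_mul_two_pow, Int.cast_natCast]
  simp only [hfloor]
  exact (tendsto_nat_floor_mul_div_atTop hx.1).comp (tendsto_pow_atTop_atTop_of_one_lt one_lt_two)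

theorem exists_bits_eq_of_chain {s t : ℕ → List Bool}
    (h : ∀ k, s (k + 1) = s k ++ (t k ++ [false])) :
    ∃ T ∈ Set.Ico (0 : ℝ) 1, ∀ k, bits T (s k).length = s k := by
  have hlower : Monotone fun k => dyadic (s k) := monotone_nat_of_le_succ fun k => by
    have := dyadic_nonneg (t k ++ [false])
    rw [h, dyadic_append]
    exact le_add_of_nonneg_right (by positivity)
  have hupper : StrictAnti fun k => dyadic (s k) + (1 / 2) ^ (s k).length :=
    strictAnti_nat_of_succ_lt fun k => by
      rw [h]
      exact dyadic_append_false_add_lt (s k) (t k)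
  have hmem := hlower.ciSup_mem_iInter_Icc_of_antitone hupper.antitone
    fun k => le_add_of_nonneg_right (by positivity)
  simp only [Set.mem_iInter, Set.mem_Icc] at hmem
  have hmem_Ico : ∀ k, ⨆ j, dyadic (s j) ∈
      Set.Ico (dyadic (s k)) (dyadic (s k) + (1 / 2) ^ (s k).length) := fun k =>
    ⟨(hmem k).1, (hmem (k + 1)).2.trans_lt (hupper k.lt_succ_self)⟩
  exact ⟨_, ⟨(dyadic_nonneg _).trans (hmem_Ico 0).1, (hmem_Ico 0).2.trans_le (dyadic_add_le_one _)⟩,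
    fun k => bits_length_eq_of_mem_Ico (hmem_Ico k)⟩

section Steering

variable {n r a w : ℕ → ℝ} {τ : ℝ}

/-- The summand `k` is the unit by which `n` outgrows `r` at every step, random ones included. -/
theorem abs_sub_mul_le_of_steered (hτ : τ ∈ Set.Icc 0 1) (hw : Monotone w) (hw0 : 0 ≤ w 0)
    (hn0 : 0 ≤ n 0) (hn : ∀ k, n (k + 1) = n k + (w k + 1))
    (hr : ∀ k, r (k + 1) = if r k < n k * a k then r k + w k else r k)
    {ε : ℝ} {K : ℕ} (ha : ∀ k ≥ K, |a k - τ| ≤ ε) {k : ℕ} (hk : K ≤ k) :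
    |r k - n k * τ| ≤ ε * n k + (w k + k) + |r K - n K * τ| := by
  have hε : 0 ≤ ε := (abs_nonneg _).trans (ha K le_rfl)
  have hwpos : ∀ k, 0 ≤ w k := fun k => hw0.trans (hw k.zero_le)
  have hnpos : ∀ k, 0 ≤ n k := fun k =>
    hn0.trans (monotone_nat_of_le_succ (fun j => by linarith [hn j, hwpos j]) k.zero_le)
  induction k, hk using Nat.le_induction with
  | base =>
    have := mul_nonneg hε (hnpos K)
    have := hwpos K
    exact le_add_of_nonneg_left (by positivity)
  | succ k hk ih =>
    obtain ⟨hτ0, hτ1⟩ := hτ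
    have hwk := hwpos k
    have hmono : w k ≤ w (k + 1) := hw k.le_succ
    have hεn : ε * n (k + 1) = ε * n k + ε * (w k + 1) := by rw [hn, mul_add]
    have hεw : 0 ≤ ε * (w k + 1) := by positivity
    have hwτ : 0 ≤ (w k + 1) * τ := by positivity
    have hwτ' : (w k + 1) * τ ≤ w k + 1 := mul_le_of_le_one_right (by positivity) hτ1
    have hna : |n k * a k - n k * τ| ≤ ε * n k := by
      rw [← mul_sub, abs_mul, abs_of_nonneg (hnpos k), mul_comm]
      exact mul_le_mul_of_nonneg_right (ha k hk) (hnpos k)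
    rw [abs_le] at ih hna ⊢
    have hC := abs_nonneg (r K - n K * τ)
    rw [hr, hεn, hn, add_mul]
    push_cast
    split_ifs <;> constructor <;> linarith

theorem isLittleO_sub_mul_of_steered (hτ : τ ∈ Set.Icc 0 1) (hw : Monotone w) (hw0 : 0 ≤ w 0)
    (hn0 : 0 ≤ n 0) (hn : ∀ k, n (k + 1) = n k + (w k + 1))
    (hr : ∀ k, r (k + 1) = if r k < n k * a k then r k + w k else r k)
    (ha : Tendsto a atTop (𝓝 τ)) (hwn : (fun k => w k + k) =o[atTop] n) :
    (fun k => r k - n k * τ) =o[atTop] n := by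
  refine isLittleO_iff.2 fun ε hε => ?_
  obtain ⟨K, hK⟩ := Metric.tendsto_atTop.1 ha (ε / 2) (half_pos hε)
  filter_upwards [(hwn.const_mul_left (1 + |r K - n K * τ|)).bound (half_pos hε),
    eventually_ge_atTop K, eventually_ge_atTop 1] with k herr hk hk1
  have hwk : 0 ≤ w k := hw0.trans (hw k.zero_le)
  have hk1 : (1 : ℝ) ≤ k := Nat.one_le_cast.2 hk1
  rw [Real.norm_eq_abs, Real.norm_eq_abs]
  calc |r k - n k * τ|
      ≤ ε / 2 * n k + (w k + k) + |r K - n K * τ| :=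
        abs_sub_mul_le_of_steered hτ hw hw0 hn0 hn hr (fun j hj => (hK j hj).le) hk
    _ ≤ ε / 2 * |n k| + (1 + |r K - n K * τ|) * (w k + k) := by
        rw [one_add_mul, add_assoc]
        gcongr ε / 2 * ?_ + (_ + ?_)
        · exact le_abs_self (n k)
        · exact le_mul_of_one_le_right (abs_nonneg _) (by linarith : 1 ≤ w k + k)
    _ ≤ ε / 2 * |n k| + ε / 2 * |n k| := by
        rw [Real.norm_eq_abs, Real.norm_eq_abs] at herr
        exact add_le_add_right ((le_abs_self _).trans herr) _
    _ = ε * |n k| := by ring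

end Steering

theorem isLittleO_natCast_of_forall_mem_block {n : ℕ → ℕ} (hn : StrictMono n) {e f : ℕ → ℝ}
    (he : e =o[atTop] fun k => (n k : ℝ))
    (hf : ∀ k m, n k ≤ m → m < n (k + 1) → |f m| ≤ e k) :
    f =o[atTop] fun m => (m : ℝ) := by
  refine isLittleO_iff.2 fun ε hε => ?_
  obtain ⟨K, hK⟩ := eventually_atTop.1 (he.bound hε)
  filter_upwards [eventually_ge_atTop (n K)] with m hm
  have hblocks := iUnion_Ico_map_succ_eq_Ici (fun k => hn.monotone (bot_le : ⊥ ≤ k))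
    hn.not_bddAbove_range_of_wellFoundedLT
  obtain ⟨k, hkm, hmk⟩ := Set.mem_iUnion.1 (hblocks.ge ((hn.monotone K.zero_le).trans hm))
  have hk : K ≤ k := Nat.lt_succ_iff.1 (hn.lt_iff_lt.1 (hm.trans_lt hmk))
  calc ‖f m‖ ≤ ‖e k‖ := (hf k m hkm hmk).trans (le_abs_self _)
    _ ≤ ε * ‖(n k : ℝ)‖ := hK k hk
    _ ≤ ε * ‖(m : ℝ)‖ := by simp only [Real.norm_natCast]; gcongr

theorem isLittleO_natCast_pow_of_sq_add_one_steps {n : ℕ → ℝ} (hn0 : 0 ≤ n 0)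
    (hn : ∀ k : ℕ, n (k + 1) = n k + ((k : ℝ) ^ 2 + 1)) {j : ℕ} (hj : j < 3) :
    (fun k : ℕ => (k : ℝ) ^ j) =o[atTop] n := by
  have hcube : ∀ k : ℕ, (k : ℝ) ^ 3 ≤ 6 * n k := by
    intro k
    induction k with
    | zero => simpa using hn0
    | succ k ih =>
      rw [hn]
      push_cast
      nlinarith [sq_nonneg ((k : ℝ) - 1)]
  refine ((isLittleO_pow_pow_atTop_of_lt (𝕜 := ℝ) hj).comp_tendsto
    tendsto_natCast_atTop_atTop).trans_isBigO (IsBigO.of_bound 6 (Eventually.of_forall fun k => ?_))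
  rw [Function.comp_apply, Real.norm_of_nonneg (by positivity), Real.norm_eq_abs]
  linarith [hcube k, le_abs_self (n k)]

/-- A stage of the greedy construction: the bits chosen so far, and the number of them that were
chosen to halve the weight of the remaining programs. -/
structure GreedyState where
  word : List Bool
  randomness : ℕ

namespace Computer

variable (U : Computer)

/-- A block of `n` bits which, appended to `s`, divides the weight of the programs extending `s` by
at least `2 ^ n`. -/
noncomputable def randomBlock (s : List Bool) (n : ℕ) : List Bool :=
  (U.exists_block_codeWeight_le s n).choose

theorem length_randomBlock (s : List Bool) (n : ℕ) : (U.randomBlock s n).length = n :=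
  (U.exists_block_codeWeight_le s n).choose_spec.1

theorem codeWeight_append_randomBlock_le (s : List Bool) (n : ℕ) :
    codeWeight (U.programsExtending (s ++ U.randomBlock s n)) ≤
      2⁻¹ ^ n * codeWeight (U.programsExtending s) :=
  (U.exists_block_codeWeight_le s n).choose_spec.2

/-- Step `k` of the greedy construction: append a block of `k ^ 2` bits, random if the randomness
lags behind its target `|s| * θ (0.s)` and zero otherwise. The final zero makes the limit of the
words an expansion with infinitely many zeros. -/
noncomputable def greedyStep (θ : ℝ → ℝ) (k : ℕ) (S : GreedyState) : GreedyState :=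
  if (S.randomness : ℝ) < S.word.length * θ (dyadic S.word) then
    ⟨S.word ++ (U.randomBlock S.word (k ^ 2) ++ [false]), S.randomness + k ^ 2⟩
  else ⟨S.word ++ (List.replicate (k ^ 2) false ++ [false]), S.randomness⟩

/-- The greedy construction steering the density of randomness towards `θ`, started at `σ`. -/
noncomputable def greedy (θ : ℝ → ℝ) (σ : List Bool) : ℕ → GreedyState
  | 0 => ⟨σ, 0⟩
  | k + 1 => U.greedyStep θ k (greedy θ σ k)

variable (θ : ℝ → ℝ) (σ : List Bool) (k : ℕ)

theorem exists_word_greedy_succ :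
    ∃ t : List Bool, t.length = k ^ 2 ∧
      (U.greedy θ σ (k + 1)).word = (U.greedy θ σ k).word ++ (t ++ [false]) := by
  rw [greedy, greedyStep]
  split_ifs
  exacts [⟨_, U.length_randomBlock _ _, rfl⟩, ⟨_, List.length_replicate, rfl⟩]

theorem length_word_greedy_succ :
    (U.greedy θ σ (k + 1)).word.length = (U.greedy θ σ k).word.length + (k ^ 2 + 1) := by
  obtain ⟨t, ht, hword⟩ := U.exists_word_greedy_succ θ σ k
  simp [hword, ht]

theorem randomness_greedy_succ :
    ((U.greedy θ σ (k + 1)).randomness : ℝ) =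
      if ((U.greedy θ σ k).randomness : ℝ) <
          (U.greedy θ σ k).word.length * θ (dyadic (U.greedy θ σ k).word) then
        (U.greedy θ σ k).randomness + (k : ℝ) ^ 2
      else (U.greedy θ σ k).randomness := by
  rw [greedy, greedyStep]
  split_ifs <;> push_cast <;> rfl

theorem codeWeight_greedy_le :
    codeWeight (U.programsExtending (U.greedy θ σ k).word) ≤
      2⁻¹ ^ (U.greedy θ σ k).randomness := by
  induction k with
  | zero => simpa [greedy] using U.codeWeight_programsExtending_le_one σ
  | succ k ih =>
    rw [greedy, greedyStep]
    split_ifs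
    · rw [← List.append_assoc, pow_add, mul_comm]
      calc codeWeight (U.programsExtending (_ ++ U.randomBlock _ (k ^ 2) ++ [false]))
          ≤ codeWeight (U.programsExtending (_ ++ U.randomBlock _ (k ^ 2))) :=
            codeWeight_mono (U.programsExtending_anti (List.prefix_append _ _))
        _ ≤ 2⁻¹ ^ (k ^ 2) * codeWeight (U.programsExtending (U.greedy θ σ k).word) :=
            U.codeWeight_append_randomBlock_le _ _
        _ ≤ 2⁻¹ ^ (k ^ 2) * 2⁻¹ ^ (U.greedy θ σ k).randomness := by gcongr
    · exact (codeWeight_mono (U.programsExtending_anti (List.prefix_append _ _))).trans ih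

end Computer

namespace IsOptimal

variable {U : Computer}

theorem H_greedy_le (hU : IsOptimal U) :
    ∃ d, ∀ θ σ k,
      H U (U.greedy θ σ k).word ≤ H U σ + (U.greedy θ σ k).randomness + k * (k + d) := by
  obtain ⟨d, hd⟩ := hU.H_append_le
  obtain ⟨drandom, hrandom⟩ := hU.H_le_of_length_eq_sq
  obtain ⟨dzero, hzero⟩ := hU.H_replicate_sq_le false
  have hblock : ∀ s t, H U (s ++ (t ++ [false])) ≤ H U s + H U t + (H U [false] + 2 * d) := by
    intro s t
    have := hd s (t ++ [false])
    have := hd t [false]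
    omega
  refine ⟨drandom + dzero + (H U [false] + 2 * d), fun θ σ k => ?_⟩
  induction k with
  | zero => simp [Computer.greedy]
  | succ k ih =>
    rw [Computer.greedy, Computer.greedyStep]
    split_ifs
    · have := hblock (U.greedy θ σ k).word (U.randomBlock (U.greedy θ σ k).word (k ^ 2))
      have := hrandom k _ (U.length_randomBlock (U.greedy θ σ k).word (k ^ 2))
      nlinarith
    · have := hblock (U.greedy θ σ k).word (List.replicate (k ^ 2) false)
      have := hzero k
      nlinarith

theorem H_bits_mem_Icc_of_greedy (hU : IsOptimal U) (θ : ℝ → ℝ) (σ : List Bool) :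
    ∃ C : ℕ, ∀ {T : ℝ} {k m : ℕ},
      bits T (U.greedy θ σ k).word.length = (U.greedy θ σ k).word →
      (U.greedy θ σ k).word.length ≤ m → m < (U.greedy θ σ (k + 1)).word.length →
      H U (bits T m) ∈ Set.Icc (U.greedy θ σ k).randomness
        ((U.greedy θ σ k).randomness + C * (k ^ 2 + 1)) := by
  obtain ⟨c, hc⟩ := hU.H_append_le_mul_length
  obtain ⟨d, hd⟩ := hU.H_greedy_le
  refine ⟨H U σ + d + c + 1, fun {T k m} hbits hkm hmk => ?_⟩
  obtain ⟨u, hu⟩ := bits_prefix_bits T hkm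
  rw [hbits] at hu
  refine ⟨hU.le_H_of_codeWeight_le (hu ▸ List.prefix_append _ _) (U.codeWeight_greedy_le θ σ k),
    ?_⟩
  have hlength : u.length ≤ k ^ 2 := by
    have := congrArg List.length hu
    rw [U.length_word_greedy_succ] at hmk
    rw [List.length_append, length_bits] at this
    omega
  have hk : k ≤ k ^ 2 := Nat.le_self_pow two_ne_zero k
  calc H U (bits T m)
      ≤ H U (U.greedy θ σ k).word + c * u.length := hu ▸ hc _ u
    _ ≤ H U σ + (U.greedy θ σ k).randomness + k * (k + d) + c * k ^ 2 := by
        gcongr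
        exact hd θ σ k
    _ ≤ (U.greedy θ σ k).randomness + (H U σ + d + c + 1) * (k ^ 2 + 1) := by
        nlinarith [Nat.mul_le_mul_left d hk]

theorem abs_H_bits_sub_mul_le (hU : IsOptimal U) (θ : ℝ → ℝ) (σ : List Bool) :
    ∃ C : ℝ, ∀ {T τ : ℝ} {k m : ℕ},
      bits T (U.greedy θ σ k).word.length = (U.greedy θ σ k).word → τ ∈ Set.Icc 0 1 →
      (U.greedy θ σ k).word.length ≤ m → m < (U.greedy θ σ (k + 1)).word.length →
      |H U (bits T m) - m * τ| ≤
        |(U.greedy θ σ k).randomness - (U.greedy θ σ k).word.length * τ| +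
          C * ((k : ℝ) ^ 2 + 1) := by
  obtain ⟨C, hC⟩ := hU.H_bits_mem_Icc_of_greedy θ σ
  refine ⟨C + 1, fun {T τ k m} hbits hτ hkm hmk => ?_⟩
  obtain ⟨hlower, hupper⟩ := hC hbits hkm hmk
  rw [U.length_word_greedy_succ] at hmk
  set r := (U.greedy θ σ k).randomness
  set n := (U.greedy θ σ k).word.length
  rify at hlower hupper hkm hmk
  have hH : |(H U (bits T m) : ℝ) - r| ≤ C * ((k : ℝ) ^ 2 + 1) := by
    rw [abs_of_nonneg (sub_nonneg.2 hlower)]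
    linarith
  have hm : |((m : ℝ) - n) * τ| ≤ (k : ℝ) ^ 2 + 1 := by
    rw [abs_of_nonneg (mul_nonneg (sub_nonneg.2 hkm) hτ.1)]
    exact (mul_le_of_le_one_right (sub_nonneg.2 hkm) hτ.2).trans (by linarith)
  calc |(H U (bits T m) : ℝ) - m * τ|
      = |(r - n * τ) + (H U (bits T m) - r) - (m - n) * τ| := by ring_nf
    _ ≤ |r - n * τ| + |(H U (bits T m) : ℝ) - r| + |((m : ℝ) - n) * τ| :=
        (abs_sub _ _).trans (by gcongr; exact abs_add_le _ _)
    _ ≤ |r - n * τ| + (C + 1) * ((k : ℝ) ^ 2 + 1) := by linarith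

theorem isLittleO_H_bits_sub_mul (hU : IsOptimal U) {θ : ℝ → ℝ} {σ : List Bool} {T : ℝ}
    (hT : T ∈ Set.Ico 0 1)
    (hbits : ∀ k, bits T (U.greedy θ σ k).word.length = (U.greedy θ σ k).word)
    (hcont : ContinuousAt θ T) (hmem : θ T ∈ Set.Icc 0 1) :
    (fun m : ℕ => H U (bits T m) - m * θ T) =o[atTop] fun m : ℕ => (m : ℝ) := by
  set n : ℕ → ℕ := fun k => (U.greedy θ σ k).word.length with hn
  have hmono : StrictMono n := strictMono_nat_of_lt_succ fun k => by
    simp only [hn, U.length_word_greedy_succ]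
    omega
  have hsteps : ∀ k, (n (k + 1) : ℝ) = n k + ((k : ℝ) ^ 2 + 1) := fun k => by
    simp only [hn, U.length_word_greedy_succ]
    push_cast
    rfl
  have hpow : ∀ {j : ℕ}, j < 3 → (fun k : ℕ => (k : ℝ) ^ j) =o[atTop] fun k => (n k : ℝ) :=
    isLittleO_natCast_pow_of_sq_add_one_steps (n := fun k => n k) (Nat.cast_nonneg _) hsteps
  have hdensity : Tendsto (fun k => θ (dyadic (U.greedy θ σ k).word)) atTop (𝓝 (θ T)) :=
    hcont.tendsto.comp (((tendsto_dyadic_bits hT).comp hmono.tendsto_atTop).congr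
      fun k => congrArg dyadic (hbits k))
  have hsteered : (fun k => (U.greedy θ σ k).randomness - n k * θ T) =o[atTop]
      fun k => (n k : ℝ) :=
    isLittleO_sub_mul_of_steered hmem (w := fun k : ℕ => (k : ℝ) ^ 2)
      (fun i j hij => by dsimp only; gcongr) (by simp) (Nat.cast_nonneg _) hsteps
      (U.randomness_greedy_succ θ σ) hdensity
      (by simpa only [pow_one] using (hpow (j := 2) (by simp)).add (hpow (j := 1) (by simp)))
  obtain ⟨C, hC⟩ := hU.abs_H_bits_sub_mul_le θ σ
  have hsq : (fun k : ℕ => C * ((k : ℝ) ^ 2 + 1)) =o[atTop] fun k => (n k : ℝ) := by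
    simpa only [pow_zero] using
      ((hpow (j := 2) (by simp)).add (hpow (j := 0) (by simp))).const_mul_left C
  exact isLittleO_natCast_of_forall_mem_block hmono (hsteered.norm_left.add hsq)
    fun k m hkm hmk => hC (hbits k) hmem hkm hmk

theorem exists_bits_eq_tendsto (hU : IsOptimal U) (θ : ℝ → ℝ) (σ : List Bool) :
    ∃ T ∈ Set.Ico (0 : ℝ) 1, bits T σ.length = σ ∧ (ContinuousAt θ T → θ T ∈ Set.Icc 0 1 →
      Tendsto (fun n : ℕ => (H U (bits T n) : ℝ) / n) atTop (𝓝 (θ T))) := by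
  choose t _ hword using U.exists_word_greedy_succ θ σ
  obtain ⟨T, hT, hbits⟩ := exists_bits_eq_of_chain (s := fun k => (U.greedy θ σ k).word) hword
  refine ⟨T, hT, hbits 0, fun hcont hmem => ?_⟩
  have hlim := (hU.isLittleO_H_bits_sub_mul hT hbits hcont hmem).tendsto_div_nhds_zero.add_const
    (θ T)
  rw [zero_add] at hlim
  refine hlim.congr' ?_
  filter_upwards [eventually_ne_atTop 0] with m hm
  field_simp
  ring

end IsOptimal

theorem fixed_points_dense_general (U : Computer) (hU : IsOptimal U) {θ : ℝ → ℝ}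
    (hθ : ContinuousOn θ (Set.Ioo 0 1)) (hmaps : Set.MapsTo θ (Set.Ioo 0 1) (Set.Icc 0 1)) :
    Set.Icc (0 : ℝ) 1 ⊆ closure {T : ℝ | T ∈ Set.Ioo (0 : ℝ) 1 ∧
      Tendsto (fun n : ℕ => (H U (bits T n) : ℝ) / n) atTop (𝓝 (θ T))} := by
  rw [← closure_Ioo zero_ne_one]
  refine closure_minimal (fun x hx => Metric.mem_closure_iff.2 fun ε hε => ?_) isClosed_closure
  obtain ⟨n, hn⟩ : ∃ n : ℕ, (1 / 2 : ℝ) ^ n < min ε (min x (1 - x)) :=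
    exists_pow_lt_of_lt_one (lt_min hε (lt_min hx.1 (sub_pos.2 hx.2))) one_half_lt_one
  simp only [lt_min_iff] at hn
  obtain ⟨T, hT, hbits, hlim⟩ := hU.exists_bits_eq_tendsto θ (bits x n)
  rw [length_bits] at hbits
  have hdist := abs_sub_lt_of_bits_eq (Set.Ioo_subset_Ico_self hx) hT hbits.symm
  have hTmem : T ∈ Set.Ioo (0 : ℝ) 1 := by
    rw [abs_lt] at hdist
    constructor <;> linarith
  exact ⟨T, ⟨hTmem, hlim (hθ.continuousAt (Ioo_mem_nhds hTmem.1 hTmem.2)) (hmaps hTmem)⟩,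
    hdist.trans hn.1⟩

/-- **Corollary (paper Cor 15).** The set
`{T ∈ (0,1) : lim_{n→∞} H(T_n)/n = T}` is dense in `[0,1]`. -/
theorem fixed_points_dense (U : Computer) (hU : IsOptimal U) :
    Set.Icc (0 : ℝ) 1 ⊆ closure {T : ℝ | T ∈ Set.Ioo (0 : ℝ) 1 ∧
      Tendsto (fun n : ℕ => (H U (bits T n) : ℝ) / n) atTop (nhds T)} :=
  fixed_points_dense_general U hU continuousOn_id fun _ hT => Set.Ioo_subset_Icc_self hT
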